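/- arXiv:2409.05744 — 3 statements merged into one kernel-verified Lean document; each statement's English description precedes it below -/
import Mathlib

section
/- Let X be a real normed space, let ρ, ρ_L > 0, let K and L be convex subsets of X, and let x, y ∈ X satisfy: (1) y ∈ K and ‖x − y‖ = dist(x, K) = ρ (y is a nearest point of K to x); (2) dist(y, K ∩ L) > ρ_L. If K ∩ L is nonempty, then dist(x, K ∩ L) ≥ ρ·ζ_X(ρ_L/ρ). Moreover, if X is uniformly convex, then the inequality is strict: dist(x, K ∩ L) > ρ·ζ_X(ρ_L/ρ). -/
open scoped Classical

noncomputable section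

/-- `y` is quasi-orthogonal to `x`: some nonzero continuous linear functional attains
its norm on `x` and vanishes on `y`. -/
def QuasiOrth {X : Type*} [NormedAddCommGroup X] [NormedSpace ℝ X] (y x : X) : Prop :=
  ∃ f : X →L[ℝ] ℝ, f ≠ 0 ∧ f x = ‖f‖ * ‖x‖ ∧ f y = 0

/-- `ζ_X(ε) = inf {‖x + ε y‖ : ‖x‖ = ‖y‖ = 1, y ⌐ x}`. -/
def zetaConv (X : Type*) [NormedAddCommGroup X] [NormedSpace ℝ X] (ε : ℝ) : ℝ :=
  sInf {t : ℝ | ∃ x y : X, ‖x‖ = 1 ∧ ‖y‖ = 1 ∧ QuasiOrth y x ∧ t = ‖x + ε • y‖}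

/-- `ζ⁺_X(ε) = sup {‖x + ε y‖ : ‖x‖ = ‖y‖ = 1, y ⌐ x}`. -/
def zetaSmooth (X : Type*) [NormedAddCommGroup X] [NormedSpace ℝ X] (ε : ℝ) : ℝ :=
  sSup {t : ℝ | ∃ x y : X, ‖x‖ = 1 ∧ ‖y‖ = 1 ∧ QuasiOrth y x ∧ t = ‖x + ε • y‖}

/-- The modulus of convexity `δ_X(ε)`. -/
def modConv (X : Type*) [NormedAddCommGroup X] [NormedSpace ℝ X] (ε : ℝ) : ℝ :=
  sInf {t : ℝ | ∃ x y : X, ‖x‖ ≤ 1 ∧ ‖y‖ ≤ 1 ∧ ε ≤ ‖x - y‖ ∧ t = 1 - ‖x + y‖ / 2}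

/-- The modulus of smoothness `ρ_X(τ)`. -/
def modSmooth (X : Type*) [NormedAddCommGroup X] [NormedSpace ℝ X] (τ : ℝ) : ℝ :=
  sSup {t : ℝ | ∃ x y : X, ‖x‖ = 1 ∧ ‖y‖ = τ ∧ t = (‖x + y‖ + ‖x - y‖) / 2 - 1}

/-- `X` is uniformly convex: the modulus of convexity is positive on `(0, 2]`. -/
def UnifConvex (X : Type*) [NormedAddCommGroup X] [NormedSpace ℝ X] : Prop :=
  ∀ ε ∈ Set.Ioc (0 : ℝ) 2, 0 < modConv X ε

/-- `X` is uniformly smooth: `ρ_X(τ)/τ → 0` as `τ → 0⁺`. -/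
def UnifSmooth (X : Type*) [NormedAddCommGroup X] [NormedSpace ℝ X] : Prop :=
  Filter.Tendsto (fun τ => modSmooth X τ / τ) (nhdsWithin 0 (Set.Ioi 0)) (nhds 0)

/-- A Helly sequence for `X`: `r : {1,2,…} → (0,1]` with `r 1 = 1` and
`r (j+1) * ζ_X (r (j+1)) = r j` for all `j ≥ 1`. -/
def IsHellySeq (X : Type*) [NormedAddCommGroup X] [NormedSpace ℝ X] (r : ℕ → ℝ) : Prop :=
  (∀ j : ℕ, 1 ≤ j → r j ∈ Set.Ioc (0 : ℝ) 1) ∧ r 1 = 1 ∧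
    ∀ j : ℕ, 1 ≤ j → r (j + 1) * zetaConv X (r (j + 1)) = r j

end


/-!
Write `u = y - x` and `v = z - y` with `z ∈ K ∩ L`. Separating `K` from the open ball of radius `ρ`
around `x` gives a functional that attains its norm at `u` and is nonnegative at `v`. Rotating `v`
away from `u` onto the kernel of this functional, at constant length, does not increase `‖u + v‖`
and turns `v` into a vector quasi-orthogonal to `u`; hence `ρ ζ(‖v‖ / ρ) ≤ ‖u + v‖ = ‖z - x‖`.
Along the ray from `u` in direction `v` the norm is convex and starts at its minimum `ρ`, so
`dist(x, K ∩ L) - ρ` is at least `ρ (ζ(ρ_L / ρ) - 1)` even when the latter is multiplied by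
`dist(y, K ∩ L) / ρ_L > 1`. This makes the inequality strict as soon as `ζ(ρ_L / ρ) ≠ 1`, which
uniform convexity guarantees.
-/

section Seminormed

variable {E : Type*} [SeminormedAddCommGroup E] [NormedSpace ℝ E]

lemma norm_add_smul_sub_norm_le (u v : E) {t : ℝ} (ht₀ : 0 ≤ t) (ht₁ : t ≤ 1) :
    ‖u + t • v‖ - ‖u‖ ≤ t * (‖u + v‖ - ‖u‖) := by
  have hconv : ‖(1 - t) • u + t • (u + v)‖ ≤ (1 - t) * ‖u‖ + t * ‖u + v‖ :=
    convexOn_univ_norm.2 trivial trivial (sub_nonneg.mpr ht₁) ht₀ (sub_add_cancel 1 t)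
  rw [show (1 - t) • u + t • (u + v) = u + t • v by module] at hconv
  linarith

lemma norm_add_smul_sub_smul_le {u w : E} {α β : ℝ} (hα : 0 ≤ α) (hβ : 0 ≤ β)
    (hnorm : ‖α • w - β • u‖ ≤ ‖w‖) (huw : ‖u‖ ≤ ‖u + w‖) :
    ‖u + (α • w - β • u)‖ ≤ ‖u + w‖ := by
  rcases le_total (α + β) 1 with hsum | hsum
  · calc ‖u + (α • w - β • u)‖ = ‖α • (u + w) + (1 - (α + β)) • u‖ := by congr 1; module
      _ ≤ α * ‖u + w‖ + (1 - (α + β)) * ‖u‖ := by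
          refine norm_add_le_of_le (norm_smul_of_nonneg hα _).le ?_
          exact (norm_smul_of_nonneg (sub_nonneg.mpr hsum) _).le
      _ ≤ α * ‖u + w‖ + (1 - (α + β)) * ‖u + w‖ := by gcongr
      _ ≤ ‖u + w‖ := by nlinarith [mul_nonneg hβ (norm_nonneg (u + w))]
  · -- Up to scaling, `u + h` and `w` are both combinations of `u + w` and `h`.
    set h := α • w - β • u with h_def
    have hpos : 0 < α + β := by linarith
    have hrotated : (α + β) * ‖u + h‖ ≤ α * ‖u + w‖ + (α + β - 1) * ‖h‖ := by
      rw [← norm_smul_of_nonneg hpos.le, ← norm_smul_of_nonneg hα,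
        ← norm_smul_of_nonneg (sub_nonneg.mpr hsum),
        show (α + β) • (u + h) = α • (u + w) + (α + β - 1) • h by rw [h_def]; module]
      exact norm_add_le _ _
    have horiginal : (α + β) * ‖w‖ ≤ β * ‖u + w‖ + ‖h‖ := by
      rw [← norm_smul_of_nonneg hpos.le, ← norm_smul_of_nonneg hβ,
        show (α + β) • w = β • (u + w) + h by rw [h_def]; module]
      exact norm_add_le _ _
    have hslack : (α + β - 1) * ‖h‖ ≤ (α + β - 1) * ‖w‖ := by gcongr
    refine le_of_mul_le_mul_left ?_ hpos
    linarith

/-- `f` is a support functional at `u`: a nonzero functional attaining its norm in the direction of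
`u`. A vector is quasi-orthogonal to `u` when some support functional at `u` vanishes on it. -/
def SupportsAt (f : E →L[ℝ] ℝ) (u : E) : Prop :=
  f ≠ 0 ∧ f u = ‖f‖ * ‖u‖

namespace SupportsAt

variable {f : E →L[ℝ] ℝ} {u w : E}

lemma opNorm_pos (hf : SupportsAt f u) : 0 < ‖f‖ := by
  refine (norm_nonneg f).lt_of_ne' fun h => hf.1 (ContinuousLinearMap.ext fun w => ?_)
  simpa [h] using f.le_opNorm w

lemma smul (hf : SupportsAt f u) {c : ℝ} (hc : 0 ≤ c) : SupportsAt f (c • u) := by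
  refine ⟨hf.1, ?_⟩
  rw [map_smul, hf.2, norm_smul_of_nonneg hc, smul_eq_mul]
  ring

lemma norm_le_of_apply_le (hf : SupportsAt f u) (h : f u ≤ f w) : ‖u‖ ≤ ‖w‖ :=
  le_of_mul_le_mul_left (hf.2 ▸ h.trans ((le_abs_self _).trans (f.le_opNorm w))) hf.opNorm_pos

lemma norm_le_norm_add (hf : SupportsAt f u) (hw : 0 ≤ f w) : ‖u‖ ≤ ‖u + w‖ :=
  hf.norm_le_of_apply_le (by rwa [map_add, le_add_iff_nonneg_right])

end SupportsAt

lemma supportsAt_of_forall_apply_le {f : E →L[ℝ] ℝ} {u : E} (hf : f ≠ 0)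
    (h : ∀ w, ‖w‖ ≤ ‖u‖ → f w ≤ f u) : SupportsAt f u := by
  have hfu : 0 ≤ f u := by simpa using h 0 (by simp)
  refine ⟨hf, le_antisymm ((le_abs_self _).trans (f.le_opNorm u)) ?_⟩
  rcases (norm_nonneg u).eq_or_lt with hu | hu
  · rwa [← hu, mul_zero]
  rw [← le_div_iff₀ hu]
  refine ContinuousLinearMap.opNorm_le_of_unit_norm (by positivity) fun w hw => ?_
  have hscale : ‖‖u‖ • w‖ = ‖u‖ := by rw [norm_smul, norm_norm, hw, mul_one]
  have hpos := h (‖u‖ • w) hscale.le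
  have hneg := h (-(‖u‖ • w)) (by rw [norm_neg, hscale])
  rw [map_neg] at hneg
  rw [map_smul, smul_eq_mul] at hpos hneg
  rw [Real.norm_eq_abs, abs_le, neg_le, le_div_iff₀ hu, le_div_iff₀ hu]
  constructor <;> linarith

lemma exists_supportsAt_sub_of_dist_eq_infDist {K : Set E} (hK : Convex ℝ K) {x y : E}
    (hy : y ∈ K) (hxy : dist x y = Metric.infDist x K) (hpos : 0 < Metric.infDist x K) :
    ∃ f : E →L[ℝ] ℝ, SupportsAt f (y - x) ∧ ∀ z ∈ K, f y ≤ f z := by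
  obtain ⟨f, s, hball, hfK⟩ := geometric_hahn_banach_open (convex_ball x (Metric.infDist x K))
    Metric.isOpen_ball hK Metric.disjoint_ball_infDist
  have hclosedBall : ∀ a ∈ Metric.closedBall x (Metric.infDist x K), f a ≤ s := by
    rw [← closure_ball x hpos.ne']
    exact closure_minimal (fun a ha => (hball a ha).le) (isClosed_le f.continuous continuous_const)
  have hys : f y ≤ s := hclosedBall y (Metric.mem_closedBall'.mpr hxy.le)
  refine ⟨f, supportsAt_of_forall_apply_le ?_ fun w hw => ?_, fun z hz => hys.trans (hfK z hz)⟩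
  · rintro rfl
    exact ((hball x (Metric.mem_ball_self hpos)).trans_le (hfK y hy)).false
  · have hw' : f (x + w) ≤ s := hclosedBall _ <| by
      rwa [Metric.mem_closedBall, dist_self_add_left, ← hxy, dist_eq_norm']
    rw [map_add] at hw'
    rw [map_sub]
    linarith [hfK y hy]

end Seminormed

section Normed

variable {X : Type*} [NormedAddCommGroup X] [NormedSpace ℝ X]

lemma SupportsAt.quasiOrth {f : X →L[ℝ] ℝ} {u k : X} (hf : SupportsAt f u) (hk : f k = 0) :
    QuasiOrth k u :=
  ⟨f, hf.1, hf.2, hk⟩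

lemma QuasiOrth.exists_supportsAt {u k : X} (h : QuasiOrth k u) :
    ∃ f : X →L[ℝ] ℝ, SupportsAt f u ∧ f k = 0 :=
  let ⟨f, hf, hfu, hfk⟩ := h
  ⟨f, ⟨hf, hfu⟩, hfk⟩

lemma zetaConv_le_norm_add_smul {u k : X} (hu : ‖u‖ = 1) (hk : ‖k‖ = 1) (h : QuasiOrth k u)
    (ε : ℝ) : zetaConv X ε ≤ ‖u + ε • k‖ :=
  csInf_le ⟨0, by rintro _ ⟨x, y, -, -, -, rfl⟩; exact norm_nonneg _⟩ ⟨u, k, hu, hk, h, rfl⟩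

lemma le_zetaConv (hex : ∃ u k : X, ‖u‖ = 1 ∧ ‖k‖ = 1 ∧ QuasiOrth k u) {ε b : ℝ}
    (h : ∀ u k : X, ‖u‖ = 1 → ‖k‖ = 1 → QuasiOrth k u → b ≤ ‖u + ε • k‖) :
    b ≤ zetaConv X ε := by
  obtain ⟨u, k, hu, hk, hku⟩ := hex
  refine le_csInf ⟨_, u, k, hu, hk, hku, rfl⟩ ?_
  rintro _ ⟨x, y, hx, hy, hyx, rfl⟩
  exact h x y hx hy hyx

-- Here `zetaConv` is the junk value `sInf ∅ = 0`; this is the case `dim X ≤ 1`.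
lemma zetaConv_eq_zero_of_not_exists_quasiOrth
    (hex : ¬∃ u k : X, ‖u‖ = 1 ∧ ‖k‖ = 1 ∧ QuasiOrth k u) (ε : ℝ) : zetaConv X ε = 0 := by
  refine (congrArg sInf (Set.eq_empty_iff_forall_notMem.mpr ?_)).trans Real.sInf_empty
  rintro _ ⟨u, k, hu, hk, hku, -⟩
  exact hex ⟨u, k, hu, hk, hku⟩

lemma zetaConv_le_one_add_abs (ε : ℝ) : zetaConv X ε ≤ 1 + |ε| := by
  by_cases hex : ∃ u k : X, ‖u‖ = 1 ∧ ‖k‖ = 1 ∧ QuasiOrth k u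
  · obtain ⟨u, k, hu, hk, hku⟩ := hex
    refine (zetaConv_le_norm_add_smul hu hk hku ε).trans (norm_add_le_of_le hu.le ?_)
    rw [norm_smul, hk, mul_one, Real.norm_eq_abs]
  · rw [zetaConv_eq_zero_of_not_exists_quasiOrth hex]
    positivity

namespace SupportsAt

variable {f : X →L[ℝ] ℝ} {u v : X}

lemma zetaConv_norm_le (hf : SupportsAt f u) (hu : ‖u‖ = 1) (hv : 0 ≤ f v) :
    zetaConv X ‖v‖ ≤ ‖u + v‖ := by
  have hfu : f u = ‖f‖ := by rw [hf.2, hu, mul_one]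
  set c := f v / ‖f‖ with hc
  have hc₀ : 0 ≤ c := div_nonneg hv hf.opNorm_pos.le
  have hker : f (v - c • u) = 0 := by
    rw [map_sub, map_smul, hfu, smul_eq_mul, hc, div_mul_cancel₀ _ hf.opNorm_pos.ne', sub_self]
  rcases eq_or_ne (v - c • u) 0 with hpar | hpar
  · have hray : SameRay ℝ u v := sub_eq_zero.mp hpar ▸ SameRay.sameRay_nonneg_smul_right u hc₀
    rw [hray.norm_add, hu]
    simpa using zetaConv_le_one_add_abs (X := X) ‖v‖
  · set k := ‖v - c • u‖⁻¹ • (v - c • u) with hk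
    have hk₁ : ‖k‖ = 1 := norm_smul_inv_norm (𝕜 := ℝ) hpar
    have hfk : f k = 0 := by rw [hk, map_smul, hker, smul_zero]
    have hexpand : ‖v‖ • k
        = (‖v‖ * ‖v - c • u‖⁻¹) • v - (‖v‖ * ‖v - c • u‖⁻¹ * c) • u := by
      rw [hk]; module
    refine (zetaConv_le_norm_add_smul hu hk₁ (hf.quasiOrth hfk) ‖v‖).trans ?_
    rw [hexpand]
    refine norm_add_smul_sub_smul_le (by positivity) (by positivity) ?_ (hf.norm_le_norm_add hv)
    rw [← hexpand, norm_smul, norm_norm, hk₁, mul_one]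

lemma one_add_mul_zetaConv_sub_one_le (hf : SupportsAt f u) (hu : ‖u‖ = 1) (hv : 0 ≤ f v)
    {ε : ℝ} (hε : 0 < ε) (hεv : ε ≤ ‖v‖) :
    1 + ‖v‖ / ε * (zetaConv X ε - 1) ≤ ‖u + v‖ := by
  have hv₀ : 0 < ‖v‖ := hε.trans_le hεv
  have hnorm : ‖(ε / ‖v‖) • v‖ = ε := by
    rw [norm_smul_of_nonneg (by positivity), div_mul_cancel₀ _ hv₀.ne']
  have hζ : zetaConv X ε ≤ ‖u + (ε / ‖v‖) • v‖ := by
    have h := hf.zetaConv_norm_le hu (v := (ε / ‖v‖) • v)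
      (by rw [map_smul, smul_eq_mul]; positivity)
    rwa [hnorm] at h
  have hray := norm_add_smul_sub_norm_le u v (by positivity) ((div_le_one hv₀).mpr hεv)
  rw [hu] at hray
  have : ‖v‖ / ε * (zetaConv X ε - 1) ≤ ‖u + v‖ - 1 :=
    calc ‖v‖ / ε * (zetaConv X ε - 1) ≤ ‖v‖ / ε * (ε / ‖v‖ * (‖u + v‖ - 1)) := by
          gcongr; linarith
      _ = ‖u + v‖ - 1 := by field_simp
  linarith

lemma norm_add_mul_zetaConv_sub_one_le (hf : SupportsAt f u) (hu : 0 < ‖u‖) (hv : 0 ≤ f v)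
    {r : ℝ} (hr : 0 < r) (hrv : r ≤ ‖v‖) :
    ‖u‖ + ‖v‖ / r * (‖u‖ * (zetaConv X (r / ‖u‖) - 1)) ≤ ‖u + v‖ := by
  have hnorm (w : X) : ‖‖u‖⁻¹ • w‖ = ‖w‖ / ‖u‖ := by
    rw [norm_smul_of_nonneg (inv_nonneg.mpr hu.le), inv_mul_eq_div]
  have hunit := (hf.smul (inv_nonneg.mpr hu.le)).one_add_mul_zetaConv_sub_one_le
    (v := ‖u‖⁻¹ • v) (ε := r / ‖u‖) (by rw [hnorm, div_self hu.ne'])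
    (by rw [map_smul, smul_eq_mul]; positivity) (by positivity) (by rw [hnorm]; gcongr)
  rw [← smul_add, hnorm, hnorm, div_div_div_cancel_right₀ hu.ne', le_div_iff₀ hu] at hunit
  linarith

end SupportsAt

lemma modConv_le {p q : X} (hp : ‖p‖ ≤ 1) (hq : ‖q‖ ≤ 1) {ε : ℝ} (hε : ε ≤ ‖p - q‖) :
    modConv X ε ≤ 1 - ‖p + q‖ / 2 := by
  refine csInf_le ⟨0, ?_⟩ ⟨p, q, hp, hq, hε, rfl⟩
  rintro _ ⟨x, y, hx, hy, -, rfl⟩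
  linarith [norm_add_le_of_le hx hy]

lemma norm_add_le_mul_one_sub_modConv {p q : X} {R : ℝ} (hR : 0 < R) (hp : ‖p‖ ≤ R)
    (hq : ‖q‖ ≤ R) {ε : ℝ} (hε : R * ε ≤ ‖p - q‖) :
    ‖p + q‖ ≤ 2 * R * (1 - modConv X ε) := by
  have hnorm (w : X) : ‖R⁻¹ • w‖ = ‖w‖ / R := by
    rw [norm_smul_of_nonneg (inv_nonneg.mpr hR.le), inv_mul_eq_div]
  have h : modConv X ε ≤ 1 - ‖p + q‖ / R / 2 := by
    rw [← hnorm, smul_add]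
    refine modConv_le ?_ ?_ ?_
    · rwa [hnorm, div_le_one hR]
    · rwa [hnorm, div_le_one hR]
    · rwa [← smul_sub, hnorm, le_div_iff₀' hR]
  calc ‖p + q‖ = 2 * R * (‖p + q‖ / R / 2) := by field_simp
    _ ≤ 2 * R * (1 - modConv X ε) := by gcongr; linarith

lemma QuasiOrth.one_add_modConv_le_norm_add_smul {u k : X} (h : QuasiOrth k u) (hu : ‖u‖ = 1)
    (hk : ‖k‖ = 1) {ε : ℝ} (hε : 0 ≤ ε) :
    1 + modConv X (ε / (1 + ε)) ≤ ‖u + ε • k‖ := by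
  obtain ⟨f, hf, hfk⟩ := h.exists_supportsAt
  have hlower (t : ℝ) : 1 ≤ ‖u + t • k‖ :=
    hu ▸ hf.norm_le_norm_add (by rw [map_smul, hfk, smul_zero])
  have hεk : ‖ε • k‖ = ε := by rw [norm_smul_of_nonneg hε, hk, mul_one]
  set N := ‖u + ε • k‖
  have hN : 1 ≤ N := hlower ε
  have hsep : N * (ε / (1 + ε)) ≤ ‖u - (u + ε • k)‖ := by
    have hupper : N ≤ 1 + ε := norm_add_le_of_le hu.le hεk.le
    rw [sub_add_cancel_left, norm_neg, hεk, mul_div_left_comm]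
    exact mul_le_of_le_one_right hε ((div_le_one (by positivity)).mpr hupper)
  have hmid : 2 ≤ ‖u + (u + ε • k)‖ := by
    rw [show u + (u + ε • k) = (2 : ℝ) • (u + (ε / 2) • k) by module,
      norm_smul_of_nonneg zero_le_two]
    linarith [hlower (ε / 2)]
  have hconv := norm_add_le_mul_one_sub_modConv (one_pos.trans_le hN) (hu.trans_le hN) le_rfl hsep
  nlinarith

lemma UnifConvex.one_lt_zetaConv (hX : UnifConvex X)
    (hex : ∃ u k : X, ‖u‖ = 1 ∧ ‖k‖ = 1 ∧ QuasiOrth k u) {ε : ℝ} (hε : 0 < ε) :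
    1 < zetaConv X ε := by
  have hδ : 0 < modConv X (ε / (1 + ε)) :=
    hX _ ⟨by positivity, (div_le_iff₀ (by positivity)).mpr (by linarith)⟩
  have hle : 1 + modConv X (ε / (1 + ε)) ≤ zetaConv X ε :=
    le_zetaConv hex fun u k hu hk h => h.one_add_modConv_le_norm_add_smul hu hk hε.le
  linarith

lemma UnifConvex.zetaConv_ne_one (hX : UnifConvex X) {ε : ℝ} (hε : 0 < ε) :
    zetaConv X ε ≠ 1 := by
  by_cases hex : ∃ u k : X, ‖u‖ = 1 ∧ ‖k‖ = 1 ∧ QuasiOrth k u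
  · exact (hX.one_lt_zetaConv hex hε).ne'
  · rw [zetaConv_eq_zero_of_not_exists_quasiOrth hex]
    exact zero_ne_one

lemma add_mul_zetaConv_sub_one_le_infDist {K S : Set X} (hK : Convex ℝ K) (hSK : S ⊆ K)
    (hS : S.Nonempty) {x y : X} (hy : y ∈ K) {ρ r : ℝ} (hρ : 0 < ρ)
    (hxK : Metric.infDist x K = ρ) (hxy : ‖x - y‖ = ρ) (hr : 0 < r)
    (hrS : r ≤ Metric.infDist y S) :
    ρ + Metric.infDist y S / r * (ρ * (zetaConv X (r / ρ) - 1)) ≤ Metric.infDist x S := by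
  obtain ⟨f, hf, hfK⟩ := exists_supportsAt_sub_of_dist_eq_infDist hK hy
    (by rw [dist_eq_norm, hxy, hxK]) (hxK.symm ▸ hρ)
  have hu : ‖y - x‖ = ρ := norm_sub_rev x y ▸ hxy
  refine (Metric.le_infDist hS).mpr fun z hz => ?_
  have hyz : Metric.infDist y S ≤ ‖z - y‖ :=
    dist_eq_norm' y z ▸ Metric.infDist_le_dist_of_mem hz
  have hfzy : 0 ≤ f (z - y) := by
    rw [map_sub]
    exact sub_nonneg.mpr (hfK z (hSK hz))
  have hexcess := hf.norm_add_mul_zetaConv_sub_one_le (hu.symm ▸ hρ) hfzy hr (hrS.trans hyz)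
  have hmin := hf.norm_le_norm_add hfzy
  rw [hu, add_comm (y - x), sub_add_sub_cancel, ← dist_eq_norm' x z] at hexcess hmin
  rcases le_total (ρ * (zetaConv X (r / ρ) - 1)) 0 with hneg | hpos
  · have hfactor : 0 ≤ Metric.infDist y S / r := div_nonneg Metric.infDist_nonneg hr.le
    linarith [mul_nonpos_of_nonneg_of_nonpos hfactor hneg]
  · exact le_trans (by gcongr) hexcess

end Normed

theorem min_deviation_lemma_general
    {X : Type*} [NormedAddCommGroup X] [NormedSpace ℝ X] {ρ r : ℝ} (hρ : 0 < ρ) (hr : 0 < r)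
    {K S : Set X} (hK : Convex ℝ K) (hSK : S ⊆ K) (hS : S.Nonempty)
    {x y : X} (hy : y ∈ K) (hxK : Metric.infDist x K = ρ) (hxy : ‖x - y‖ = ρ)
    (hrS : r < Metric.infDist y S) :
    ρ * zetaConv X (r / ρ) ≤ Metric.infDist x S ∧
      (zetaConv X (r / ρ) ≠ 1 → ρ * zetaConv X (r / ρ) < Metric.infDist x S) := by
  have hρS : ρ ≤ Metric.infDist x S := hxK ▸ Metric.infDist_le_infDist_of_subset hSK hS
  have hbound := add_mul_zetaConv_sub_one_le_infDist hK hSK hS hy hρ hxK hxy hr hrS.le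
  have hfactor : 1 < Metric.infDist y S / r := (one_lt_div hr).mpr hrS
  rcases lt_trichotomy (zetaConv X (r / ρ)) 1 with hζ | hζ | hζ
  · have hlt : ρ * zetaConv X (r / ρ) < ρ := mul_lt_of_lt_one_right hρ hζ
    exact ⟨(hlt.trans_le hρS).le, fun _ => hlt.trans_le hρS⟩
  · exact ⟨by rwa [hζ, mul_one], fun hne => absurd hζ hne⟩
  · have hlt := lt_mul_of_one_lt_left (mul_pos hρ (sub_pos.mpr hζ)) hfactor
    have hstrict : ρ * zetaConv X (r / ρ) < Metric.infDist x S := by linarith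
    exact ⟨hstrict.le, fun _ => hstrict⟩

/-- **Minimal deviation lemma.** If `y` is a nearest point of a convex set `K` to `x`
with `dist(x,K) = ρ`, and `dist(y, K ∩ L) > ρ_L`, then
`dist(x, K ∩ L) ≥ ρ · ζ_X(ρ_L/ρ)`, with strict inequality when `X` is uniformly
convex. -/
theorem min_deviation_lemma
    {X : Type*} [NormedAddCommGroup X] [NormedSpace ℝ X]
    {ρ ρL : ℝ} (hρ : 0 < ρ) (hρL : 0 < ρL)
    (K L : Set X) (hK : Convex ℝ K) (hL : Convex ℝ L)
    (x y : X) (hyK : y ∈ K) (hρdist : Metric.infDist x K = ρ)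
    (hnear : ‖x - y‖ = ρ)
    (hfar : ρL < Metric.infDist y (K ∩ L))
    (hne : (K ∩ L).Nonempty) :
    ρ * zetaConv X (ρL / ρ) ≤ Metric.infDist x (K ∩ L) ∧
      (UnifConvex X → ρ * zetaConv X (ρL / ρ) < Metric.infDist x (K ∩ L)) := by
  obtain ⟨hle, hlt⟩ := min_deviation_lemma_general hρ hρL hK Set.inter_subset_left hne hyK hρdist
    hnear hfar
  exact ⟨hle, fun hX => hlt (hX.zetaConv_ne_one (div_pos hρL hρ))⟩
end

section
/- Let X be a uniformly convex real Banach space, let r be a Helly sequence for X, and let j ≥ 2. Let K and L be convex subsets of X and let p ∈ K be a nearest point of K to the origin (p ∈ K and ‖p‖ = dist(0, K)). Assume ‖p‖ > 1/r_{j−1} and dist(p, L) > 1. Then either K ∩ L is empty or dist(0, K ∩ L) > 1/r_j. -/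
open scoped Classical

/-!
Let `f` be a norm-one functional supporting `K` at its nearest point `p`, so that `f p = ‖p‖` and
`f ≥ ‖p‖` on `K`. For `q ∈ K` the displacement `v = q - p` splits as `a • p + y` with `a ≥ 0` and
`f y = 0`. Tilting `v` into the kernel of `f` while not increasing its length does not increase
`‖p + v‖`, so `‖q‖ ≥ ‖p‖ ζ_X(s)` as soon as `‖v‖ ≥ s ‖p‖`. If `q ∈ L` then `‖v‖ ≥ 1`; for
`s = r_j` the recursion `r_{j-1} = s ζ_X(s)` turns `‖p‖ > 1 / r_{j-1}` into `‖p‖ ζ_X(s) > 1 / s`.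
The condition `‖v‖ ≥ s ‖p‖` can only fail when `‖p‖ > 1 / s`, and then `‖q‖ ≥ ‖p‖` is enough.
-/

section

variable {X : Type*} [NormedAddCommGroup X] [NormedSpace ℝ X]

namespace QuasiOrth

variable {x y : X} {a s : ℝ}

theorem smul_smul_of_nonneg (h : QuasiOrth y x) (b : ℝ) (ha : 0 ≤ a) :
    QuasiOrth (b • y) (a • x) := by
  obtain ⟨f, hf, hfx, hfy⟩ := h
  refine ⟨f, hf, ?_, by rw [map_smul, hfy, smul_zero]⟩
  rw [map_smul, hfx, norm_smul_of_nonneg ha, smul_eq_mul, mul_left_comm]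

theorem norm_le_norm_add_smul (h : QuasiOrth y x) (t : ℝ) : ‖x‖ ≤ ‖x + t • y‖ := by
  obtain ⟨f, hf, hfx, hfy⟩ := h
  refine le_of_mul_le_mul_left ?_ (norm_pos_iff.2 hf)
  calc ‖f‖ * ‖x‖ = f (x + t • y) := by rw [map_add, map_smul, hfy, smul_zero, add_zero, hfx]
    _ ≤ ‖f‖ * ‖x + t • y‖ := (le_abs_self _).trans (f.le_opNorm _)

theorem monotoneOn_norm_add_smul (h : QuasiOrth y x) :
    MonotoneOn (fun t : ℝ => ‖x + t • y‖) (Set.Ici 0) := by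
  intro s hs u _ hsu
  have hconv : ConvexOn ℝ Set.univ fun t : ℝ => ‖x + t • y‖ := by
    simpa [Function.comp_def, AffineMap.lineMap_apply, add_comm] using
      convexOn_univ_norm.comp_affineMap (AffineMap.lineMap x (x + y) : ℝ →ᵃ[ℝ] X)
  have hmax : ‖x + s • y‖ ≤ max ‖x + (0 : ℝ) • y‖ ‖x + u • y‖ :=
    hconv.le_max_of_mem_Icc (Set.mem_univ _) (Set.mem_univ _) ⟨hs, hsu⟩
  rwa [zero_smul, add_zero, max_eq_right (h.norm_le_norm_add_smul u)] at hmax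

theorem norm_add_smul_le_of_mul_norm_le (h : QuasiOrth y x) (ha : 0 ≤ a) (hs : 0 ≤ s)
    (hsy : s * ‖y‖ ≤ ‖a • x + y‖) : ‖x + s • y‖ ≤ ‖x + (a • x + y)‖ := by
  have ha' : 0 < 1 + a := by linarith
  -- The ray through `x + (a • x + y)` meets the line `x + ℝ y` at `w`.
  set β := (1 + a)⁻¹
  set w := x + β • y
  have hβ : 0 ≤ β := inv_nonneg.2 ha'.le
  have hw : (1 + a) • w = x + (a • x + y) := by
    rw [smul_add, smul_inv_smul₀ ha'.ne', add_smul, one_smul, add_assoc]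
  have hnorm : ‖x + (a • x + y)‖ = ‖w‖ + a * ‖w‖ := by
    rw [← hw, norm_smul_of_nonneg ha'.le, add_mul, one_mul]
  rw [hnorm]
  rcases le_total s β with hsβ | hβs
  · exact (h.monotoneOn_norm_add_smul hs hβ hsβ).trans
      (le_add_of_nonneg_right (mul_nonneg ha (norm_nonneg w)))
  · have hv : a • x + y = β • y + a • w :=
      add_left_cancel (a := x) (by rw [← hw]; simp only [w]; module)
    have hsplit : s * ‖y‖ ≤ β * ‖y‖ + a * ‖w‖ := calc
      s * ‖y‖ ≤ ‖a • x + y‖ := hsy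
      _ = ‖β • y + a • w‖ := by rw [hv]
      _ ≤ β * ‖y‖ + a * ‖w‖ := by
        simpa only [norm_smul_of_nonneg hβ, norm_smul_of_nonneg ha] using
          norm_add_le (β • y) (a • w)
    calc ‖x + s • y‖ = ‖w + (s - β) • y‖ := by congr 1; simp only [w]; module
      _ ≤ ‖w‖ + (s - β) * ‖y‖ := by
        simpa only [norm_smul_of_nonneg (sub_nonneg.2 hβs)] using norm_add_le w ((s - β) • y)
      _ ≤ ‖w‖ + a * ‖w‖ := by linarith

end QuasiOrth

theorem bddBelow_norm_add_smul_quasiOrth (s : ℝ) :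
    BddBelow {t : ℝ | ∃ x y : X, ‖x‖ = 1 ∧ ‖y‖ = 1 ∧ QuasiOrth y x ∧ t = ‖x + s • y‖} :=
  ⟨0, by rintro _ ⟨x, y, -, -, -, rfl⟩; exact norm_nonneg _⟩

theorem zetaConv_le_one_add {s : ℝ} (hs : 0 ≤ s) : zetaConv X s ≤ 1 + s := by
  by_cases hpair : ∃ x y : X, ‖x‖ = 1 ∧ ‖y‖ = 1 ∧ QuasiOrth y x
  · obtain ⟨x, y, hx, hy, hyx⟩ := hpair
    calc zetaConv X s ≤ ‖x + s • y‖ :=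
          csInf_le (bddBelow_norm_add_smul_quasiOrth s) ⟨x, y, hx, hy, hyx, rfl⟩
      _ ≤ 1 + s := by
        simpa only [hx, hy, norm_smul_of_nonneg hs, mul_one] using norm_add_le x (s • y)
  · -- In dimension at most one there is no such pair, and `sInf ∅ = 0`.
    have hempty : {t : ℝ | ∃ x y : X, ‖x‖ = 1 ∧ ‖y‖ = 1 ∧ QuasiOrth y x ∧ t = ‖x + s • y‖} = ∅ :=
      Set.eq_empty_of_forall_notMem fun _ ⟨x, y, hx, hy, hyx, _⟩ => hpair ⟨x, y, hx, hy, hyx⟩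
    rw [zetaConv, hempty, Real.sInf_empty]
    linarith

theorem QuasiOrth.zetaConv_mul_norm_le {x y : X} (h : QuasiOrth y x) (hy : y ≠ 0) (s : ℝ) :
    zetaConv X s * ‖x‖ ≤ ‖x + (s * ‖x‖ / ‖y‖) • y‖ := by
  rcases eq_or_ne x 0 with rfl | hx
  · rw [norm_zero, mul_zero]
    exact norm_nonneg _
  have hunit : zetaConv X s ≤ ‖‖x‖⁻¹ • x + s • ‖y‖⁻¹ • y‖ :=
    csInf_le (bddBelow_norm_add_smul_quasiOrth s)
      ⟨_, _, norm_smul_inv_norm hx, norm_smul_inv_norm hy,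
        h.smul_smul_of_nonneg _ (inv_nonneg.2 (norm_nonneg x)), rfl⟩
  calc zetaConv X s * ‖x‖ ≤ ‖‖x‖⁻¹ • x + s • ‖y‖⁻¹ • y‖ * ‖x‖ := by gcongr
    _ = ‖‖x‖ • (‖x‖⁻¹ • x + s • ‖y‖⁻¹ • y)‖ := by rw [norm_smul, norm_norm, mul_comm]
    _ = ‖x + (s * ‖x‖ / ‖y‖) • y‖ := by
      rw [smul_add, smul_inv_smul₀ (norm_ne_zero_iff.2 hx), smul_smul, smul_smul,
        ← div_eq_mul_inv, mul_comm ‖x‖ s]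

theorem zetaConv_mul_norm_le_norm_add {f : X →L[ℝ] ℝ} {x v : X} {s : ℝ} (hf : f ≠ 0)
    (hfx : f x = ‖f‖ * ‖x‖) (hfv : 0 ≤ f v) (hs : 0 ≤ s) (hv : s * ‖x‖ ≤ ‖v‖) :
    zetaConv X s * ‖x‖ ≤ ‖x + v‖ := by
  rcases eq_or_ne x 0 with rfl | hx
  · rw [norm_zero, mul_zero]
    exact norm_nonneg _
  have hfx_pos : 0 < f x := hfx ▸ mul_pos (norm_pos_iff.2 hf) (norm_pos_iff.2 hx)
  obtain ⟨a, y, ha, hfy, rfl⟩ : ∃ (a : ℝ) (y : X), 0 ≤ a ∧ f y = 0 ∧ a • x + y = v :=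
    ⟨f v / f x, v - (f v / f x) • x, by positivity,
      by rw [map_sub, map_smul, smul_eq_mul, div_mul_cancel₀ _ hfx_pos.ne', sub_self],
      add_sub_cancel _ _⟩
  rcases eq_or_ne y 0 with rfl | hy
  · rw [add_zero] at hv ⊢
    calc zetaConv X s * ‖x‖ ≤ (1 + s) * ‖x‖ := by gcongr; exact zetaConv_le_one_add hs
      _ ≤ ‖x‖ + ‖a • x‖ := by linarith
      _ = ‖x + a • x‖ := (SameRay.sameRay_nonneg_smul_right x ha).norm_add.symm
  · have horth : QuasiOrth y x := ⟨f, hf, hfx, hfy⟩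
    have hlen : s * ‖x‖ / ‖y‖ * ‖y‖ ≤ ‖a • x + y‖ := by
      rwa [div_mul_cancel₀ _ (norm_ne_zero_iff.2 hy)]
    exact (horth.zetaConv_mul_norm_le hy s).trans
      (horth.norm_add_smul_le_of_mul_norm_le ha (by positivity) hlen)

theorem opNorm_mul_le_of_forall_mem_ball_le {f : X →L[ℝ] ℝ} {ρ u : ℝ} (hρ : 0 < ρ)
    (hfu : ∀ z ∈ Metric.ball (0 : X) ρ, f z ≤ u) : ‖f‖ * ρ ≤ u := by
  have hclosed : ∀ z ∈ Metric.closedBall (0 : X) ρ, f z ≤ u := by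
    rw [← closure_ball (0 : X) hρ.ne']
    exact fun z hz => le_on_closure hfu f.continuous.continuousOn continuousOn_const hz
  refine (le_div_iff₀ hρ).1 (f.opNorm_bound_of_ball_bound hρ u fun z hz => abs_le.2 ⟨?_, ?_⟩)
  · have hneg := hclosed (-z) (by simpa using hz)
    rw [map_neg] at hneg
    linarith
  · exact hclosed z hz

theorem exists_supporting_functional_of_norm_eq_infDist {K : Set X} (hK : Convex ℝ K) {p : X}
    (hpK : p ∈ K) (hnear : ‖p‖ = Metric.infDist (0 : X) K) (hp : p ≠ 0) :
    ∃ f : X →L[ℝ] ℝ, f ≠ 0 ∧ f p = ‖f‖ * ‖p‖ ∧ ∀ q ∈ K, f p ≤ f q := by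
  have hp_pos : 0 < ‖p‖ := norm_pos_iff.2 hp
  obtain ⟨f, u, hball, hKu⟩ := geometric_hahn_banach_open (convex_ball (0 : X) ‖p‖)
    Metric.isOpen_ball hK (hnear ▸ Metric.disjoint_ball_infDist)
  have hu : 0 < u := by simpa using hball 0 (Metric.mem_ball_self hp_pos)
  have hnorm : ‖f‖ * ‖p‖ ≤ u :=
    opNorm_mul_le_of_forall_mem_ball_le hp_pos fun z hz => (hball z hz).le
  have hle : f p ≤ ‖f‖ * ‖p‖ := (le_abs_self _).trans (f.le_opNorm p)
  have hup : u ≤ f p := hKu p hpK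
  refine ⟨f, ?_, hle.antisymm (hnorm.trans hup), fun q hq => (hle.trans hnorm).trans (hKu q hq)⟩
  rintro rfl
  exact hu.not_ge hup

theorem zetaConv_mul_norm_le_norm_of_norm_eq_infDist {K : Set X} (hK : Convex ℝ K) {p q : X}
    (hpK : p ∈ K) (hnear : ‖p‖ = Metric.infDist (0 : X) K) (hqK : q ∈ K) {s : ℝ} (hs : 0 ≤ s)
    (hpq : s * ‖p‖ ≤ ‖q - p‖) : zetaConv X s * ‖p‖ ≤ ‖q‖ := by
  rcases eq_or_ne p 0 with rfl | hp
  · rw [norm_zero, mul_zero]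
    exact norm_nonneg q
  obtain ⟨f, hf, hfp, hfK⟩ := exists_supporting_functional_of_norm_eq_infDist hK hpK hnear hp
  have hfq : 0 ≤ f (q - p) := by
    rw [map_sub]
    exact sub_nonneg.2 (hfK q hqK)
  simpa only [add_sub_cancel] using zetaConv_mul_norm_le_norm_add hf hfp hfq hs hpq

theorem one_div_lt_infDist_inter_of_one_lt_mul_zetaConv {K L : Set X} (hK : Convex ℝ K) {p : X}
    (hpK : p ∈ K) (hnear : ‖p‖ = Metric.infDist (0 : X) K) (hpL : 1 ≤ Metric.infDist p L)
    (hne : (K ∩ L).Nonempty) {s : ℝ} (hs : 0 < s) (hsp : 1 < s * zetaConv X s * ‖p‖) :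
    1 / s < Metric.infDist (0 : X) (K ∩ L) := by
  rcases lt_or_ge (1 / s) ‖p‖ with hfar | hclose
  · exact hfar.trans_le (hnear ▸ Metric.infDist_le_infDist_of_subset Set.inter_subset_left hne)
  · have hζ : 1 / s < zetaConv X s * ‖p‖ := by rwa [div_lt_iff₀' hs, ← mul_assoc]
    refine hζ.trans_le ((Metric.le_infDist hne).2 fun q ⟨hqK, hqL⟩ => ?_)
    have hpq : s * ‖p‖ ≤ ‖q - p‖ := calc
      s * ‖p‖ ≤ 1 := (le_div_iff₀' hs).1 hclose
      _ ≤ dist p q := hpL.trans (Metric.infDist_le_dist_of_mem hqL)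
      _ = ‖q - p‖ := by rw [dist_comm, dist_eq_norm]
    rw [dist_zero_left]
    exact zetaConv_mul_norm_le_norm_of_norm_eq_infDist hK hpK hnear hqK hs.le hpq

theorem min_deviation_helly_sequence_general {r : ℕ → ℝ} (hr : IsHellySeq X r) {j : ℕ}
    (hj : 2 ≤ j) (K L : Set X) (hK : Convex ℝ K) (p : X) (hpK : p ∈ K)
    (hnear : ‖p‖ = Metric.infDist (0 : X) K) (hp : 1 / r (j - 1) < ‖p‖)
    (hpL : 1 ≤ Metric.infDist p L) :
    K ∩ L = ∅ ∨ 1 / r j < Metric.infDist (0 : X) (K ∩ L) := by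
  obtain ⟨hr_mem, -, hr_rec⟩ := hr
  have hpred : 1 ≤ j - 1 := Nat.le_sub_one_of_lt hj
  have hrec : r j * zetaConv X (r j) = r (j - 1) := by
    simpa only [Nat.sub_add_cancel (one_le_two.trans hj)] using hr_rec (j - 1) hpred
  refine (K ∩ L).eq_empty_or_nonempty.imp_right fun hne => ?_
  refine one_div_lt_infDist_inter_of_one_lt_mul_zetaConv hK hpK hnear hpL hne
    (hr_mem j (one_le_two.trans hj)).1 ?_
  rwa [hrec, ← div_lt_iff₀' (hr_mem (j - 1) hpred).1]

end

/-- **Minimal deviation along the Helly sequence.** -/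
theorem min_deviation_helly_sequence
    {X : Type*} [NormedAddCommGroup X] [NormedSpace ℝ X] [CompleteSpace X]
    (hX : UnifConvex X) {r : ℕ → ℝ} (hr : IsHellySeq X r)
    {j : ℕ} (hj : 2 ≤ j)
    (K L : Set X) (hK : Convex ℝ K) (hL : Convex ℝ L)
    (p : X) (hpK : p ∈ K) (hnear : ‖p‖ = Metric.infDist (0 : X) K)
    (hp : 1 / r (j - 1) < ‖p‖) (hpL : 1 < Metric.infDist p L) :
    K ∩ L = ∅ ∨ 1 / r j < Metric.infDist (0 : X) (K ∩ L) :=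
  min_deviation_helly_sequence_general hr hj K L hK p hpK hnear hp hpL.le
end

section
/- Let X be a uniformly smooth real Banach space and let R : {1,2,…} → ℝ be a sequence with R_1 = 1 such that for every j ≥ 1, R_{j+1} > 1 and R_{j+1} = R_j · ζ⁺_X(1/(R_{j+1} − 1)). Let S be a subset of the closed unit ball of X whose convex hull contains the origin. Then there exists a sequence x_1, x_2, … of points of S such that ‖x_1 + x_2 + ⋯ + x_k‖ ≤ R_k for every k ≥ 1; equivalently, ‖(x_1 + ⋯ + x_k)/k‖ ≤ R_k/k. -/
open scoped Classical

/-!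
Let `s` be a sum of `k` points with `‖s‖ ≤ R k`. A functional norming `s` is nonpositive at some
`x ∈ S`, because `0` lies in the convex hull of `S`. Hence a point `m = s + τ • x` of least norm on
the line `s + ℝ x` can be found with `τ ≥ 0`, and there `x` is quasi-orthogonal to `m`. If `1 ≤ τ`,
convexity gives `‖s + x‖ ≤ ‖s‖`. Otherwise `‖s + x‖ = ‖m + (1 - τ) • x‖ ≤ ‖m + x‖`, which for every
`T > 0` is at most `1 + T` when `‖m‖ ≤ T`, and at most `‖m‖ ζ⁺(‖x‖ / ‖m‖) ≤ ‖s‖ ζ⁺(1 / T)` when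
`T < ‖m‖`, by homogeneity and monotonicity of `ζ⁺`. Since `1 ≤ ζ⁺(1 / T)`, the recurrence for `R`
makes all these bounds at most `R (k + 1)` when `T = R (k + 1) - 1`, so `x` can be added to `s`.
-/

lemma exists_seq_sum_of_forall_exists_add {M : Type*} [AddCommMonoid M] {S : Set M}
    {P : ℕ → M → Prop} (zero : P 0 0) (step : ∀ k s, P k s → ∃ x ∈ S, P (k + 1) (s + x)) :
    ∃ x : ℕ → M, (∀ i, x i ∈ S) ∧ ∀ k, P k (∑ i ∈ Finset.range k, x i) := by
  choose next next_mem next_spec using step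
  let state : ∀ k, {s // P k s} := fun k ↦
    k.rec ⟨0, zero⟩ fun k s ↦ ⟨s + next k s s.2, next_spec k s s.2⟩
  let x : ℕ → M := fun k ↦ next k (state k).1 (state k).2
  refine ⟨x, fun k ↦ next_mem k _ _, fun k ↦ ?_⟩
  have sum_eq : ∑ i ∈ Finset.range k, x i = (state k).1 := by
    induction k with
    | zero => rfl
    | succ k ih => rw [Finset.sum_range_succ, ih]
  exact sum_eq ▸ (state k).2

section QuasiOrthogonality

variable {X : Type*} [NormedAddCommGroup X] [NormedSpace ℝ X] {x y s : X}

/-- Birkhoff–James orthogonality of `x` to `y`: no point of the line `x + ℝ y` is closer to the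
origin than `x`. For `x ≠ 0` this is the same as `y ⌐ x`, with the two arguments in the opposite
order. -/
def IsBirkhoffOrtho (x y : X) : Prop :=
  ∀ t : ℝ, ‖x‖ ≤ ‖x + t • y‖

namespace IsBirkhoffOrtho

lemma neg_right (h : IsBirkhoffOrtho x y) : IsBirkhoffOrtho x (-y) := fun t ↦ by
  simpa only [neg_smul, smul_neg] using h (-t)

lemma monotoneOn_norm_add_smul (h : IsBirkhoffOrtho x y) :
    MonotoneOn (fun t : ℝ ↦ ‖x + t • y‖) (Set.Ici 0) := by
  intro a (ha : 0 ≤ a) b _ hab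
  rcases hab.eq_or_lt with rfl | hlt
  · rfl
  have hb : 0 < b := ha.trans_lt hlt
  have mem_segment : x + a • y ∈ segment ℝ x (x + b • y) := by
    refine ⟨1 - a / b, a / b, sub_nonneg.2 ((div_le_one hb).2 hab), by positivity, by ring, ?_⟩
    match_scalars <;> field
  exact (convexOn_univ_norm.le_on_segment trivial trivial mem_segment).trans_eq
    (max_eq_right (h b))

-- By Hahn–Banach in the quotient by `ℝ y`, where the norm of the class of `x` is still `‖x‖`.
lemma quasiOrth (h : IsBirkhoffOrtho x y) (hx : x ≠ 0) : QuasiOrth y x := by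
  let L : Submodule ℝ X := Submodule.span ℝ {y}
  have : IsClosed (L : Set X) := L.closed_of_finiteDimensional
  have norm_mk_le (z : X) : ‖L.mkQL z‖ ≤ ‖z‖ := Submodule.Quotient.norm_mk_le L z
  have norm_le_norm_mk : ‖x‖ ≤ ‖L.mkQL x‖ := by
    refine QuotientAddGroup.le_norm_iff.2 fun z hz ↦ ?_
    obtain ⟨t, ht⟩ := Submodule.mem_span_singleton.1 ((Submodule.Quotient.eq L).1 hz)
    simpa only [ht, add_sub_cancel] using h t
  obtain ⟨g, norm_g_le, hg⟩ := exists_dual_vector'' ℝ (L.mkQL x)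
  let f : X →L[ℝ] ℝ := g ∘L L.mkQL
  have norm_f_le : ‖f‖ ≤ 1 := f.opNorm_le_bound zero_le_one fun z ↦
    (g.le_of_opNorm_le norm_g_le _).trans (by gcongr; exact norm_mk_le z)
  have hf : f x = ‖x‖ := hg.trans ((norm_mk_le x).antisymm norm_le_norm_mk)
  refine ⟨f, fun hf0 ↦ hx (by simpa [hf0] using hf.symm), ?_, ?_⟩
  · refine ((le_abs_self _).trans (f.le_opNorm x)).antisymm ?_
    exact (mul_le_of_le_one_left (norm_nonneg x) norm_f_le).trans_eq hf.symm
  · have : L.mkQL y = 0 :=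
      (Submodule.Quotient.mk_eq_zero L).2 (Submodule.mem_span_singleton_self y)
    simp only [f, ContinuousLinearMap.comp_apply, this, map_zero]

end IsBirkhoffOrtho

namespace QuasiOrth

lemma isBirkhoffOrtho (h : QuasiOrth y x) : IsBirkhoffOrtho x y := by
  obtain ⟨f, f_ne, hfx, hfy⟩ := h
  intro t
  refine le_of_mul_le_mul_left ?_ (norm_pos_iff.2 f_ne)
  calc ‖f‖ * ‖x‖ = f (x + t • y) := by simp [hfx, hfy]
    _ ≤ ‖f‖ * ‖x + t • y‖ := (le_abs_self _).trans (f.le_opNorm _)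

protected lemma smul_smul (h : QuasiOrth y x) (a : ℝ) {b : ℝ} (hb : 0 ≤ b) :
    QuasiOrth (a • y) (b • x) := by
  obtain ⟨f, f_ne, hfx, hfy⟩ := h
  refine ⟨f, f_ne, ?_, by simp [hfy]⟩
  rw [map_smul, smul_eq_mul, hfx, norm_smul_of_nonneg hb, mul_left_comm]

lemma norm_add_smul_le_zetaSmooth (h : QuasiOrth y x) (hx : ‖x‖ = 1) (hy : ‖y‖ = 1) (ε : ℝ) :
    ‖x + ε • y‖ ≤ zetaSmooth X ε := by
  refine le_csSup ⟨1 + |ε|, ?_⟩ ⟨x, y, hx, hy, h, rfl⟩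
  rintro _ ⟨x, y, hx, hy, -, rfl⟩
  simpa [norm_smul, hx, hy] using norm_add_le x (ε • y)

lemma norm_add_le_mul_zetaSmooth (h : QuasiOrth y x) (hx : x ≠ 0) (hy : y ≠ 0) :
    ‖x + y‖ ≤ ‖x‖ * zetaSmooth X (‖y‖ / ‖x‖) := by
  have hx' : ‖x‖ ≠ 0 := norm_ne_zero_iff.2 hx
  have hy' : ‖y‖ ≠ 0 := norm_ne_zero_iff.2 hy
  have x_add_y : x + y = ‖x‖ • (‖x‖⁻¹ • x + (‖y‖ / ‖x‖) • ‖y‖⁻¹ • y) := by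
    match_scalars <;> field_simp
  calc ‖x + y‖ = ‖x‖ * ‖‖x‖⁻¹ • x + (‖y‖ / ‖x‖) • ‖y‖⁻¹ • y‖ := by
        rw [← norm_smul_of_nonneg (norm_nonneg x), ← x_add_y]
    _ ≤ ‖x‖ * zetaSmooth X (‖y‖ / ‖x‖) := by
        gcongr
        exact (h.smul_smul _ (by positivity)).norm_add_smul_le_zetaSmooth
          (norm_smul_inv_norm hx) (norm_smul_inv_norm hy) _

end QuasiOrth

lemma monotoneOn_zetaSmooth : MonotoneOn (zetaSmooth X) (Set.Ici 0) := by
  intro a ha b hb hab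
  refine Real.sSup_le ?_ (Real.sSup_nonneg ?_)
  · rintro _ ⟨x, y, hx, hy, h, rfl⟩
    exact (h.isBirkhoffOrtho.monotoneOn_norm_add_smul ha hb hab).trans
      (h.norm_add_smul_le_zetaSmooth hx hy b)
  · rintro _ ⟨x, y, -, -, -, rfl⟩
    exact norm_nonneg _

-- In dimension at most one the supremum is over the empty set, and `zetaSmooth X ε = 0`.
lemma one_le_zetaSmooth_of_ne_zero {ε : ℝ} (h : zetaSmooth X ε ≠ 0) : 1 ≤ zetaSmooth X ε := by
  obtain ⟨_, x, y, hx, hy, hyx, -⟩ := Set.nonempty_iff_ne_empty.2 fun hempty ↦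
    h ((congrArg sSup hempty).trans Real.sSup_empty)
  calc (1 : ℝ) = ‖x‖ := hx.symm
    _ ≤ ‖x + ε • y‖ := hyx.isBirkhoffOrtho ε
    _ ≤ zetaSmooth X ε := hyx.norm_add_smul_le_zetaSmooth hx hy ε

lemma exists_isBirkhoffOrtho_add_smul (s x : X) : ∃ τ : ℝ, IsBirkhoffOrtho (s + τ • x) x := by
  rcases eq_or_ne x 0 with rfl | hx
  · exact ⟨0, fun t ↦ by simp⟩
  have coercive : Filter.Tendsto (fun t : ℝ ↦ ‖s + t • x‖) (Filter.cocompact ℝ) Filter.atTop := by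
    refine Filter.tendsto_atTop_mono (f := fun t : ℝ ↦ ‖t‖ * ‖x‖ - ‖s‖) (fun t ↦ ?_) ?_
    · rw [← norm_smul, add_comm]
      exact norm_sub_le_norm_add _ _
    · exact Filter.tendsto_atTop_add_const_right _ _
        ((tendsto_norm_cocompact_atTop (E := ℝ)).atTop_mul_const (norm_pos_iff.2 hx))
  obtain ⟨τ, hτ⟩ := Continuous.exists_forall_le (by fun_prop) coercive
  exact ⟨τ, fun t ↦ by simpa only [add_smul, add_assoc] using hτ (τ + t)⟩

lemma exists_nonneg_isBirkhoffOrtho_add_smul (h : ∀ t : ℝ, t ≤ 0 → ‖s‖ ≤ ‖s + t • x‖) :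
    ∃ τ : ℝ, 0 ≤ τ ∧ IsBirkhoffOrtho (s + τ • x) x := by
  obtain ⟨τ, hτ⟩ := exists_isBirkhoffOrtho_add_smul s x
  rcases le_total 0 τ with hτ0 | hτ0
  · exact ⟨τ, hτ0, hτ⟩
  refine ⟨0, le_rfl, fun t ↦ ?_⟩
  calc ‖s + (0 : ℝ) • x‖ = ‖s‖ := by simp
    _ ≤ ‖s + τ • x‖ := h τ hτ0
    _ ≤ ‖s + τ • x + (t - τ) • x‖ := hτ (t - τ)
    _ = ‖s + (0 : ℝ) • x + t • x‖ := by congr 1; module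

lemma IsBirkhoffOrtho.norm_add_le_max {T : ℝ} (h : IsBirkhoffOrtho x y) (hy : ‖y‖ ≤ 1)
    (hT : 0 < T) (hζ : 1 ≤ zetaSmooth X (1 / T)) :
    ‖x + y‖ ≤ max (1 + T) (‖x‖ * zetaSmooth X (1 / T)) := by
  rcases le_or_gt ‖x‖ T with hxT | hTx
  · exact le_max_of_le_left (by linarith [norm_add_le x y])
  apply le_max_of_le_right
  rcases eq_or_ne y 0 with rfl | hy0
  · simpa using le_mul_of_one_le_right (norm_nonneg x) hζ
  have hx0 : x ≠ 0 := norm_pos_iff.1 (hT.trans hTx)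
  calc ‖x + y‖ ≤ ‖x‖ * zetaSmooth X (‖y‖ / ‖x‖) :=
        (h.quasiOrth hx0).norm_add_le_mul_zetaSmooth hx0 hy0
    _ ≤ ‖x‖ * zetaSmooth X (1 / T) := by
        gcongr
        exact monotoneOn_zetaSmooth (Set.mem_Ici.2 (by positivity)) (Set.mem_Ici.2 (by positivity))
          (by gcongr)

lemma norm_add_le_max_of_forall_nonpos {T : ℝ} (h : ∀ t : ℝ, t ≤ 0 → ‖s‖ ≤ ‖s + t • x‖)
    (hx : ‖x‖ ≤ 1) (hT : 0 < T) (hζ : 1 ≤ zetaSmooth X (1 / T)) :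
    ‖s + x‖ ≤ max (1 + T) (‖s‖ * zetaSmooth X (1 / T)) := by
  obtain ⟨τ, hτ, hm⟩ := exists_nonneg_isBirkhoffOrtho_add_smul h
  set m := s + τ • x with hm_def
  rcases le_total 1 τ with one_le | le_one
  · apply le_max_of_le_right
    calc ‖s + x‖ = ‖m + (τ - 1) • -x‖ := by congr 1; module
      _ ≤ ‖m + τ • -x‖ := hm.neg_right.monotoneOn_norm_add_smul (sub_nonneg.2 one_le) hτ
          (sub_le_self τ zero_le_one)
      _ = ‖s‖ := by congr 1; module
      _ ≤ ‖s‖ * zetaSmooth X (1 / T) := le_mul_of_one_le_right (norm_nonneg s) hζ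
  have norm_m_le : ‖m‖ ≤ ‖s‖ := by simpa [hm_def] using hm (-τ)
  calc ‖s + x‖ = ‖m + (1 - τ) • x‖ := by congr 1; module
    _ ≤ ‖m + (1 : ℝ) • x‖ := hm.monotoneOn_norm_add_smul (sub_nonneg.2 le_one)
        (Set.mem_Ici.2 zero_le_one) (sub_le_self 1 hτ)
    _ ≤ max (1 + T) (‖m‖ * zetaSmooth X (1 / T)) := by
        simpa only [one_smul] using hm.norm_add_le_max hx hT hζ
    _ ≤ max (1 + T) (‖s‖ * zetaSmooth X (1 / T)) := by gcongr

lemma exists_mem_forall_nonpos_norm_le_norm_add_smul {S : Set X}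
    (h0 : (0 : X) ∈ convexHull ℝ S) (s : X) :
    ∃ x ∈ S, ∀ t : ℝ, t ≤ 0 → ‖s‖ ≤ ‖s + t • x‖ := by
  obtain ⟨f, norm_f_le, hfs⟩ := exists_dual_vector'' ℝ s
  obtain ⟨x, hxS, hfx⟩ := (f.toLinearMap.concaveOn convex_univ).exists_le_of_mem_convexHull
    (Set.subset_univ S) h0
  replace hfx : f x ≤ 0 := hfx.trans_eq (map_zero f)
  refine ⟨x, hxS, fun t ht ↦ ?_⟩
  calc ‖s‖ ≤ f s + t * f x := by
        rw [hfs]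
        exact le_add_of_nonneg_right (mul_nonneg_of_nonpos_of_nonpos ht hfx)
    _ = f (s + t • x) := by simp
    _ ≤ ‖s + t • x‖ :=
        (le_abs_self _).trans (by simpa using f.le_of_opNorm_le norm_f_le (s + t • x))

lemma exists_mem_norm_add_le {S : Set X} (hS : S ⊆ Metric.closedBall 0 1)
    (h0 : (0 : X) ∈ convexHull ℝ S) {r r' : ℝ} (hr' : 1 < r')
    (hrec : r' = r * zetaSmooth X (1 / (r' - 1))) (hs : ‖s‖ ≤ r) :
    ∃ x ∈ S, ‖s + x‖ ≤ r' := by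
  obtain ⟨x, hxS, hx⟩ := exists_mem_forall_nonpos_norm_le_norm_add_smul h0 s
  have hζ : 1 ≤ zetaSmooth X (1 / (r' - 1)) := one_le_zetaSmooth_of_ne_zero fun hzero ↦ by
    rw [hzero, mul_zero] at hrec
    linarith
  refine ⟨x, hxS, (norm_add_le_max_of_forall_nonpos hx (mem_closedBall_zero_iff.1 (hS hxS))
    (sub_pos.2 hr') hζ).trans (max_le (by simp) ?_)⟩
  calc ‖s‖ * zetaSmooth X (1 / (r' - 1)) ≤ r * zetaSmooth X (1 / (r' - 1)) := by gcongr
    _ = r' := hrec.symm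

theorem no_dim_caratheodory_general (R : ℕ → ℝ) (hR1 : R 1 = 1)
    (hRrec : ∀ j : ℕ, 1 ≤ j → 1 < R (j + 1) ∧
      R (j + 1) = R j * zetaSmooth X (1 / (R (j + 1) - 1)))
    (S : Set X) (hS : S ⊆ Metric.closedBall (0 : X) 1)
    (h0 : (0 : X) ∈ convexHull ℝ S) :
    ∃ x : ℕ → X, (∀ i : ℕ, x i ∈ S) ∧
      ∀ k : ℕ, 1 ≤ k → ‖∑ i ∈ Finset.range k, x i‖ ≤ R k := by
  let P (k : ℕ) (s : X) : Prop := (k = 0 → s = 0) ∧ (1 ≤ k → ‖s‖ ≤ R k)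
  have step (k : ℕ) (s : X) (hs : P k s) : ∃ x ∈ S, P (k + 1) (s + x) := by
    suffices ∃ x ∈ S, ‖s + x‖ ≤ R (k + 1) by simpa [P] using this
    rcases k.eq_zero_or_pos with rfl | hk
    · obtain ⟨x, hxS⟩ := convexHull_nonempty_iff.1 ⟨0, h0⟩
      exact ⟨x, hxS, by simpa [hs.1 rfl, hR1] using hS hxS⟩
    · exact exists_mem_norm_add_le hS h0 (hRrec k hk).1 (hRrec k hk).2 (hs.2 hk)
  obtain ⟨x, hxS, hx⟩ := exists_seq_sum_of_forall_exists_add (by simp [P]) step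
  exact ⟨x, hxS, fun k ↦ (hx k).2⟩

end QuasiOrthogonality

/-- **No-dimensional Carathéodory theorem in uniformly smooth Banach spaces.** -/
theorem no_dim_caratheodory
    {X : Type*} [NormedAddCommGroup X] [NormedSpace ℝ X] [CompleteSpace X]
    (hX : UnifSmooth X)
    (R : ℕ → ℝ) (hR1 : R 1 = 1)
    (hRrec : ∀ j : ℕ, 1 ≤ j → 1 < R (j + 1) ∧
      R (j + 1) = R j * zetaSmooth X (1 / (R (j + 1) - 1)))
    (S : Set X) (hS : S ⊆ Metric.closedBall (0 : X) 1)
    (h0 : (0 : X) ∈ convexHull ℝ S) :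
    ∃ x : ℕ → X, (∀ i : ℕ, x i ∈ S) ∧
      ∀ k : ℕ, 1 ≤ k → ‖∑ i ∈ Finset.range k, x i‖ ≤ R k :=
  no_dim_caratheodory_general R hR1 hRrec S hS h0
end
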